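/- (Proposition 3.1, period-2 autocovariance) Let d : ℤ → ℝ be 2-periodic with 0 < d_t < 1/2 for all t, let σ_i > 0, set ψ_j(d) = Γ(j+d)/(Γ(j+1)·Γ(d)), and for i ∈ {1, 2} and a natural number h define γ_X^i(h) = σ_i² ∑_{j=0}^∞ ψ_j(d_i)·ψ_{j+h}(d_{i+h}). Then γ_X^i(h) = σ_i² · Γ(1-d_i-d_{i+1})·Γ(d_{i+1}+h) / (Γ(d_{i+1})·Γ(1-d_{i+1})·Γ(1+h-d_i)) if h is odd, and γ_X^i(h) = σ_i² · Γ(1-2d_i)·Γ(d_i+h) / (Γ(d_i)·Γ(1-d_i)·Γ(1+h-d_i)) if h is even. -/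

import Mathlib

open Real

/-!
Writing `ψ_j(a)` for the `j`-th coefficient of `(1 - x)^(-a)`, integrate the binomial series
termwise against `x^(b-1) (1-x)^(v-1)` over `(0, 1)`: this gives `∑ ψ_j(a) B(b+j, v) = B(b, v-a)`,
which is Euler's proof of Gauss's summation of `₂F₁` at `1`. Since `ψ_{j+h}(b)` is itself
`B(b+h+j, 1-b) / (Γ(b) Γ(1-b))`, the autocovariance series is the case `v = 1 - b`, with `b + h` in
place of `b`. Periodicity then replaces `d_{i+h}` by `d_{i+1}` or `d_i`.
-/

open ProbabilityTheory (beta)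
open MeasureTheory

section IntegralLemmas

theorem hasSum_integral_of_nonneg {α ι : Type*} [MeasurableSpace α] {μ : Measure α} [Countable ι]
    {F : ι → α → ℝ} {f : α → ℝ} (hF_meas : ∀ n, AEStronglyMeasurable (F n) μ)
    (hF_nonneg : ∀ n, 0 ≤ᵐ[μ] F n) (hf : Integrable f μ)
    (hF_sum : ∀ᵐ x ∂μ, HasSum (fun n => F n x) (f x)) :
    HasSum (fun n => ∫ x, F n x ∂μ) (∫ x, f x ∂μ) := by
  refine hasSum_integral_of_dominated_convergence F hF_meas (fun n => ?_) ?_ ?_ hF_sum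
  · filter_upwards [hF_nonneg n] with x hx using (Real.norm_of_nonneg hx).le
  · filter_upwards [hF_sum] with x hx using hx.summable
  · refine hf.congr ?_
    filter_upwards [hF_sum] with x hx using hx.tsum_eq.symm

theorem re_cpow_mul_one_sub_cpow {x : ℝ} (hx : x ∈ Set.Ioo (0 : ℝ) 1) (u v : ℝ) :
    ((x : ℂ) ^ ((u : ℂ) - 1) * (1 - (x : ℂ)) ^ ((v : ℂ) - 1)).re =
      x ^ (u - 1) * (1 - x) ^ (v - 1) := by
  norm_cast
  rw [← Complex.ofReal_cpow hx.1.le, ← Complex.ofReal_cpow (sub_nonneg.2 hx.2.le),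
    Complex.re_mul_ofReal, Complex.ofReal_re]

variable {u v : ℝ}

theorem integrableOn_cpow_mul_one_sub_cpow (hu : 0 < u) (hv : 0 < v) :
    IntegrableOn (fun x : ℝ => (x : ℂ) ^ ((u : ℂ) - 1) * (1 - (x : ℂ)) ^ ((v : ℂ) - 1))
      (Set.Ioo 0 1) :=
  (intervalIntegrable_iff_integrableOn_Ioo_of_le zero_le_one).1
    (Complex.betaIntegral_convergent (by simpa) (by simpa))

theorem integrableOn_rpow_mul_one_sub_rpow (hu : 0 < u) (hv : 0 < v) :
    IntegrableOn (fun x : ℝ => x ^ (u - 1) * (1 - x) ^ (v - 1)) (Set.Ioo 0 1) :=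
  (integrableOn_congr_fun (fun _ hx => re_cpow_mul_one_sub_cpow hx u v) measurableSet_Ioo).1
    (integrableOn_cpow_mul_one_sub_cpow hu hv).re

theorem integral_rpow_mul_one_sub_rpow (hu : 0 < u) (hv : 0 < v) :
    ∫ x in Set.Ioo (0 : ℝ) 1, x ^ (u - 1) * (1 - x) ^ (v - 1) = beta u v := by
  rw [ProbabilityTheory.beta_eq_betaIntegralReal u v hu hv, Complex.betaIntegral,
    intervalIntegral.integral_of_le zero_le_one, integral_Ioc_eq_integral_Ioo,
    ← RCLike.re_to_complex, ← integral_re (integrableOn_cpow_mul_one_sub_cpow hu hv)]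
  exact setIntegral_congr_fun measurableSet_Ioo
    fun x hx => (re_cpow_mul_one_sub_cpow hx u v).symm

end IntegralLemmas

/-- The coefficient `ψ_j(d) = Γ(j + d) / (Γ(j + 1) Γ(d))` in the moving-average representation
`X_t = ∑ ψ_j(d) ε_{t-j}` of the fractionally differenced process `(1 - B)^d X_t = ε_t`. -/
noncomputable def maCoeff (d : ℝ) (j : ℕ) : ℝ :=
  Gamma (j + d) / (Gamma (j + 1) * Gamma d)

section MACoeff

variable {a b : ℝ}

theorem maCoeff_nonneg (ha : 0 ≤ a) (n : ℕ) : 0 ≤ maCoeff a n :=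
  div_nonneg (Gamma_nonneg_of_nonneg (by positivity))
    (mul_nonneg (Gamma_nonneg_of_nonneg (by positivity)) (Gamma_nonneg_of_nonneg ha))

theorem Gamma_natCast_add (ha : ∀ k : ℕ, a ≠ -k) (n : ℕ) :
    Gamma (n + a) = (ascPochhammer ℝ n).eval a * Gamma a := by
  induction n with
  | zero => simp
  | succ n ih =>
    have hna : (n : ℝ) + a ≠ 0 := fun h => ha n (by linarith)
    rw [show ((n + 1 : ℕ) : ℝ) + a = n + a + 1 by push_cast; ring, Gamma_add_one hna, ih,
      ascPochhammer_succ_eval]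
    ring

theorem maCoeff_eq_multichoose (ha : ∀ k : ℕ, a ≠ -k) (n : ℕ) :
    maCoeff a n = Ring.multichoose a n := by
  have hmc : (n.factorial : ℝ) * Ring.multichoose a n = (ascPochhammer ℝ n).eval a := by
    rw [← nsmul_eq_mul, Ring.factorial_nsmul_multichoose_eq_ascPochhammer,
      Polynomial.ascPochhammer_smeval_eq_eval]
  have hfac : (n.factorial : ℝ) ≠ 0 := by positivity
  rw [maCoeff, Gamma_natCast_add ha, Gamma_nat_eq_factorial,
    mul_div_mul_right _ _ (Gamma_ne_zero ha), ← hmc, mul_div_cancel_left₀ _ hfac]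

theorem hasSum_maCoeff_mul_pow (ha : ∀ k : ℕ, a ≠ -k) {x : ℝ} (hx : |x| < 1) :
    HasSum (fun n => maCoeff a n * x ^ n) ((1 - x) ^ (-a)) := by
  have hseries := (one_div_one_sub_rpow_hasFPowerSeriesOnBall_zero a).hasSum (y := x)
    (by simpa [Metric.mem_eball, edist_dist] using hx)
  rw [rpow_neg (by linarith [le_abs_self x]), ← one_div]
  simpa [FormalMultilinearSeries.ofScalars_apply_eq, maCoeff_eq_multichoose ha,
    Ring.multichoose_eq, mul_comm] using hseries

theorem hasSum_maCoeff_mul_beta {v : ℝ} (ha : 0 < a) (hb : 0 < b) (hav : a < v) :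
    HasSum (fun n : ℕ => maCoeff a n * beta (b + n) v) (beta b (v - a)) := by
  have hv : 0 < v := ha.trans hav
  have ha_ne (k : ℕ) : a ≠ -k := by linarith [k.cast_nonneg (α := ℝ)]
  have hbn (n : ℕ) : 0 < b + n := by positivity
  let F (n : ℕ) (x : ℝ) : ℝ := maCoeff a n * (x ^ (b + n - 1) * (1 - x) ^ (v - 1))
  have hF_int (n : ℕ) : IntegrableOn (F n) (Set.Ioo 0 1) :=
    (integrableOn_rpow_mul_one_sub_rpow (hbn n) hv).const_mul _
  have hF_nonneg (n : ℕ) : ∀ x ∈ Set.Ioo (0 : ℝ) 1, 0 ≤ F n x := fun x hx =>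
    mul_nonneg (maCoeff_nonneg ha.le n)
      (mul_nonneg (rpow_nonneg hx.1.le _) (rpow_nonneg (sub_nonneg.2 hx.2.le) _))
  have hF_sum : ∀ x ∈ Set.Ioo (0 : ℝ) 1,
      HasSum (fun n => F n x) (x ^ (b - 1) * (1 - x) ^ (v - a - 1)) := fun x hx => by
    have hbinom := (hasSum_maCoeff_mul_pow ha_ne (abs_lt.2 ⟨by linarith [hx.1], hx.2⟩)).mul_right
      (x ^ (b - 1) * (1 - x) ^ (v - 1))
    convert! hbinom using 1
    · funext n
      rw [← rpow_natCast, mul_assoc, ← mul_assoc (x ^ (n : ℝ)), ← rpow_add hx.1,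
        show (n : ℝ) + (b - 1) = b + n - 1 by ring]
    · rw [mul_left_comm, ← rpow_add (sub_pos.2 hx.2), show -a + (v - 1) = v - a - 1 by ring]
  have hsum := hasSum_integral_of_nonneg (fun n => (hF_int n).aestronglyMeasurable)
    (fun n => ae_restrict_of_forall_mem measurableSet_Ioo (hF_nonneg n))
    (integrableOn_rpow_mul_one_sub_rpow hb (sub_pos.2 hav))
    (ae_restrict_of_forall_mem measurableSet_Ioo hF_sum)
  simpa only [F, integral_const_mul, integral_rpow_mul_one_sub_rpow (hbn _) hv,
    integral_rpow_mul_one_sub_rpow hb (sub_pos.2 hav)] using hsum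

theorem maCoeff_eq_beta_div (hb : b < 1) (n : ℕ) :
    maCoeff b n = beta (b + n) (1 - b) / (Gamma b * Gamma (1 - b)) := by
  have hG : Gamma (1 - b) ≠ 0 := (Gamma_pos_of_pos (sub_pos.2 hb)).ne'
  rw [maCoeff, beta, show b + n + (1 - b) = n + 1 by ring, add_comm b, div_div,
    ← mul_assoc, mul_div_mul_right _ _ hG]

theorem hasSum_maCoeff_mul_maCoeff_add (ha : 0 < a) (hb : 0 < b) (hab : a + b < 1) (h : ℕ) :
    HasSum (fun j => maCoeff a j * maCoeff b (j + h))
      (Gamma (1 - a - b) * Gamma (b + h) / (Gamma b * Gamma (1 - b) * Gamma (1 + h - a))) := by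
  have hsum := (hasSum_maCoeff_mul_beta (b := b + h) (v := 1 - b) ha (by positivity)
    (by linarith)).div_const (Gamma b * Gamma (1 - b))
  convert! hsum using 1
  · funext j
    rw [maCoeff_eq_beta_div (b := b) (by linarith), mul_div_assoc, Nat.cast_add,
      add_comm (j : ℝ), ← add_assoc]
  · rw [beta, show b + h + (1 - b - a) = 1 + h - a by ring, sub_right_comm, div_div,
      mul_comm (Gamma (b + h)), mul_comm (Gamma (1 + h - a))]

end MACoeff

/-- The lag-`h` autocovariance `γ_X^i(h) = σ_i² ∑ ψ_j(d_i) ψ_{j+h}(d_{i+h})` at season `i`,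
where `d` and `σ` are indexed by time rather than by the season modulo the period. -/
noncomputable def autocovariance (d σ : ℤ → ℝ) (i : ℤ) (h : ℕ) : ℝ :=
  σ i ^ 2 * ∑' j : ℕ, maCoeff (d i) j * maCoeff (d (i + h)) (j + h)

theorem autocovariance_eq_Gamma {d : ℤ → ℝ} {i : ℤ} {h : ℕ} (hi : 0 < d i) (hih : 0 < d (i + h))
    (hsum : d i + d (i + h) < 1) (σ : ℤ → ℝ) :
    autocovariance d σ i h = σ i ^ 2 *
      (Gamma (1 - d i - d (i + h)) * Gamma (d (i + h) + h) /
        (Gamma (d (i + h)) * Gamma (1 - d (i + h)) * Gamma (1 + h - d i))) := by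
  rw [autocovariance, (hasSum_maCoeff_mul_maCoeff_add hi hih hsum h).tsum_eq]

theorem period_two_autocovariance_general
    (d : ℤ → ℝ) (hper : Function.Periodic d 2) (hd0 : ∀ t, 0 < d t) (σ : ℤ → ℝ) (i : ℤ) (h : ℕ) :
    (Odd h → d i + d (i + 1) < 1 → autocovariance d σ i h = σ i ^ 2 *
      (Gamma (1 - d i - d (i + 1)) * Gamma (d (i + 1) + h) /
        (Gamma (d (i + 1)) * Gamma (1 - d (i + 1)) * Gamma (1 + h - d i)))) ∧
    (Even h → d i < 1 / 2 → autocovariance d σ i h = σ i ^ 2 *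
      (Gamma (1 - 2 * d i) * Gamma (d i + h) /
        (Gamma (d i) * Gamma (1 - d i) * Gamma (1 + h - d i)))) := by
  refine ⟨fun hodd hlt => ?_, fun heven hlt => ?_⟩
  · have hshift : d (i + h) = d (i + 1) := by
      obtain ⟨k, rfl⟩ := hodd
      simpa [add_assoc, add_comm, mul_comm] using hper.nat_mul k (i + 1)
    rw [autocovariance_eq_Gamma (hd0 i) (hd0 _) (by rwa [hshift]), hshift]
  · have hshift : d (i + h) = d i := by
      obtain ⟨k, rfl⟩ := heven.two_dvd
      simpa [mul_comm] using hper.nat_mul k i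
    rw [autocovariance_eq_Gamma (hd0 i) (hd0 _) (by rw [hshift]; linarith), hshift,
      show 1 - d i - d i = 1 - 2 * d i by ring]

/-- Proposition 3.1, period-2 autocovariance: Let `d : ℤ → ℝ` be
2-periodic with `0 < d_t < 1/2`, let `σ_i > 0`, and for `i ∈ {1, 2}` and natural `h`
let `γ_X^i(h) = σ_i² ∑_{j=0}^∞ ψ_j(d_i)·ψ_{j+h}(d_{i+h})`.
Then `γ_X^i(h)` equals the stated closed form, depending on the parity of `h`. -/
theorem period_two_autocovariance
    (d : ℤ → ℝ) (hper : ∀ t : ℤ, d (t + 2) = d t)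
    (hd0 : ∀ t : ℤ, 0 < d t) (hd : ∀ t : ℤ, d t < 1/2)
    (σ : ℤ → ℝ) (hσ : ∀ i : ℤ, i = 1 ∨ i = 2 → 0 < σ i)
    (γ : ℤ → ℕ → ℝ)
    (hγ : ∀ (i : ℤ) (h : ℕ), γ i h = σ i ^ 2 * ∑' j : ℕ,
      (Real.Gamma (j + d i) / (Real.Gamma (j + 1) * Real.Gamma (d i))) *
        (Real.Gamma ((j + h : ℕ) + d (i + h)) /
          (Real.Gamma ((j + h : ℕ) + 1) * Real.Gamma (d (i + h))))) :
    ∀ (i : ℤ), i = 1 ∨ i = 2 → ∀ (h : ℕ),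
      (Odd h → γ i h = σ i ^ 2 *
        (Real.Gamma (1 - d i - d (i + 1)) * Real.Gamma (d (i + 1) + h) /
          (Real.Gamma (d (i + 1)) * Real.Gamma (1 - d (i + 1)) *
            Real.Gamma (1 + h - d i)))) ∧
      (Even h → γ i h = σ i ^ 2 *
        (Real.Gamma (1 - 2 * d i) * Real.Gamma (d i + h) /
          (Real.Gamma (d i) * Real.Gamma (1 - d i) * Real.Gamma (1 + h - d i)))) := by
  intro i _ h
  rw [hγ]
  exact (period_two_autocovariance_general d hper hd0 σ i h).imp
    (· · (by linarith [hd i, hd (i + 1)])) (· · (hd i))
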